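/- Suppose N = V. Let O := (pa_G(cn(A,Y,G)) \ forb(A,Y,G)) ∪ L, where pa_G(S) denotes the set of parents in G of vertices in S. Then O satisfies the graphical adjustment criterion for A,Y,L,N in G, and for every set Z satisfying the graphical adjustment criterion: A and O\Z are d-separated by Z in G, and Y and Z\O are d-separated by {A} ∪ O in G. -/

import Mathlib

open Relation Set

namespace CausalGraph

variable {V : Type*} [Fintype V] [DecidableEq V]

/-- `p` is a path in the undirected sense from `u` to `v` along adjacency `Adj`:
a nonempty list of pairwise distinct vertices, consecutive ones adjacent,
starting at `u` and ending at `v`. -/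
def IsPath (Adj : V → V → Prop) (u v : V) (p : List V) : Prop :=
  List.Chain' Adj p ∧ p.head? = some u ∧ p.getLast? = some v ∧ p.Nodup

/-- Ancestors of `S` in the digraph `D` (every vertex is an ancestor of itself). -/
def anc (D : V → V → Prop) (S : Set V) : Set V :=
  {u | ∃ v ∈ S, Relation.ReflTransGen D u v}

/-- Descendants of `S` in the digraph `D` (every vertex is a descendant of itself). -/
def desc (D : V → V → Prop) (S : Set V) : Set V :=
  {u | ∃ v ∈ S, Relation.ReflTransGen D v u}

/-- Parents of vertices of `S` in the digraph `D`. -/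
def parents (D : V → V → Prop) (S : Set V) : Set V :=
  {u | ∃ v ∈ S, D u v}

/-- The digraph `D` is acyclic. -/
def Acyclic (D : V → V → Prop) : Prop :=
  ∀ u v, D u v → ¬ Relation.ReflTransGen D v u

/-- Vertices other than `A` lying on a directed path from `A` to `Y`. -/
def cn (D : V → V → Prop) (A Y : V) : Set V :=
  {v | v ≠ A ∧ Relation.ReflTransGen D A v ∧ Relation.ReflTransGen D v Y}

/-- The forbidden set. -/
def forb (D : V → V → Prop) (A Y : V) : Set V :=
  desc D (cn D A Y) ∪ {A}

/-- Proper back-door graph: delete every edge from `A` into `cn D A Y`. -/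
def pbd (D : V → V → Prop) (A Y : V) : V → V → Prop :=
  fun u v => D u v ∧ ¬(u = A ∧ v ∈ cn D A Y)

/-- `y` is an interior vertex of the list `p` with neighbours `x` and `z` on the path. -/
def InteriorAt (p : List V) (x y z : V) : Prop :=
  ∃ s t : List V, p = s ++ x :: y :: z :: t

/-- The path `p` is blocked by `Z` in the digraph `D`: some interior non-collider
lies in `Z`, or some interior collider has no descendant in `Z`. -/
def Blocked (D : V → V → Prop) (Z : Set V) (p : List V) : Prop :=
  (∃ x y z, InteriorAt p x y z ∧ ¬(D x y ∧ D z y) ∧ y ∈ Z) ∨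
  (∃ x y z, InteriorAt p x y z ∧ (D x y ∧ D z y) ∧ ∀ d ∈ desc D {y}, d ∉ Z)

/-- d-separation of `S` and `T` given `Z` in the digraph `D`. -/
def DSep (D : V → V → Prop) (S T Z : Set V) : Prop :=
  ∀ s ∈ S, ∀ t ∈ T, ∀ p : List V,
    IsPath (fun a b => D a b ∨ D b a) s t p → Blocked D Z p

/-- Moral graph of the subgraph of the digraph `D` induced on `Vs`. -/
def moral (D : V → V → Prop) (Vs : Set V) : SimpleGraph V :=
  SimpleGraph.fromRel (fun u v =>
    u ∈ Vs ∧ v ∈ Vs ∧ (D u v ∨ D v u ∨ ∃ w ∈ Vs, D u w ∧ D v w))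

/-- Separation in an undirected graph: every path from `S` to `T` meets `W`. -/
def USep (H : SimpleGraph V) (S T W : Set V) : Prop :=
  ∀ s ∈ S, ∀ t ∈ T, ∀ p : List V, IsPath H.Adj s t p → ∃ z ∈ W, z ∈ p

/-- `Z` is an `A`–`Y` cut in an undirected graph `H` with vertex set `Vs`. -/
def IsCut (Vs : Set V) (H : SimpleGraph V) (A Y : V) (Z : Set V) : Prop :=
  Z ⊆ Vs ∧ Z ∩ {A, Y} = ∅ ∧ ∀ p : List V, IsPath H.Adj A Y p → ∃ z ∈ Z, z ∈ p

def MinimalCut (Vs : Set V) (H : SimpleGraph V) (A Y : V) (Z : Set V) : Prop :=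
  IsCut Vs H A Y Z ∧ ∀ Z' ⊂ Z, ¬ IsCut Vs H A Y Z'

def MinimumCut (Vs : Set V) (H : SimpleGraph V) (A Y : V) (Z : Set V) : Prop :=
  IsCut Vs H A Y Z ∧ ∀ Z', IsCut Vs H A Y Z' → Z.ncard ≤ Z'.ncard

/-- Connected component of `y` in `H` restricted to the complement of `U`:
vertices reachable from `y` by paths avoiding `U`. -/
def cc (H : SimpleGraph V) (U : Set V) (y : V) : Set V :=
  {w | ∃ p : List V, IsPath H.Adj y w p ∧ ∀ x ∈ p, x ∉ U}

/-- Boundary of `S` in `H`: vertices outside `S` adjacent to some vertex of `S`. -/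
def bdry (H : SimpleGraph V) (S : Set V) : Set V :=
  {v | v ∉ S ∧ ∃ u ∈ S, H.Adj v u}

/-- The partial order `Z₁ ⊴_H Z₂` between `A`–`Y` cuts. -/
def TLE (H : SimpleGraph V) (A Y : V) (Z₁ Z₂ : Set V) : Prop :=
  USep H {Y} (Z₂ \ Z₁) Z₁ ∧ USep H {A} (Z₁ \ Z₂) Z₂

/-- Ancestors of `{A, Y} ∪ L`. -/
def ancAYL (D : V → V → Prop) (A Y : V) (L : Set V) : Set V :=
  anc D ({A, Y} ∪ L)

/-- The moral graph `H⁰` of the proper back-door graph induced on `an_G({A,Y} ∪ L)`. -/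
def H0 (D : V → V → Prop) (A Y : V) (L : Set V) : SimpleGraph V :=
  moral (pbd D A Y) (ancAYL D A Y L)

/-- The set of vertices removed from `H⁰` when constructing `H¹`. -/
def Ignore (D : V → V → Prop) (A Y : V) (L N : Set V) : Set V :=
  (ancAYL D A Y L \ {A, Y}) ∩ ((Set.univ \ N) ∪ forb D A Y)

/-- Vertex set of `H¹`. -/
def H1verts (D : V → V → Prop) (A Y : V) (L N : Set V) : Set V :=
  ancAYL D A Y L \ Ignore D A Y L N

/-- The non-parametric adjustment efficiency graph `H¹`: delete the vertices of
`Ignore`, join two remaining vertices if they are joined in `H⁰` by a path all of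
whose intermediate vertices are in `Ignore`, and join `A` and `Y` to every vertex
of `L`. -/
def H1 (D : V → V → Prop) (A Y : V) (L N : Set V) : SimpleGraph V :=
  SimpleGraph.fromRel (fun u v =>
    u ∈ H1verts D A Y L N ∧ v ∈ H1verts D A Y L N ∧
      ((∃ p : List V, IsPath (H0 D A Y L).Adj u v p ∧
          ∀ x ∈ p, x ≠ u → x ≠ v → x ∈ Ignore D A Y L N) ∨
        (u = A ∧ v ∈ L) ∨ (u = Y ∧ v ∈ L)))

/-- The graphical adjustment criterion for `A, Y, L, N` in the DAG `D`. -/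
def GAC (D : V → V → Prop) (A Y : V) (L N Z : Set V) : Prop :=
  DSep (pbd D A Y) {A} {Y} Z ∧ Z ∩ forb D A Y = ∅ ∧ L ⊆ Z ∧ Z ⊆ N

def MinimalGAC (D : V → V → Prop) (A Y : V) (L N Z : Set V) : Prop :=
  GAC D A Y L N Z ∧ ∀ Z' ⊂ Z, ¬ GAC D A Y L N Z'

def MinimumGAC (D : V → V → Prop) (A Y : V) (L N Z : Set V) : Prop :=
  GAC D A Y L N Z ∧ ∀ Z', GAC D A Y L N Z' → Z.ncard ≤ Z'.ncard

/-- Graphical admissibility of the pair `(L, N)`. -/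
def Admissible (D : V → V → Prop) (A Y : V) (L N : Set V) : Prop :=
  ∃ Z, GAC D A Y L N Z

end CausalGraph

namespace CausalGraph

/-!
Suppose that `W` contains all parents of `C` outside `C` and no descendant of `C`. A path from `C`
to a non-descendant of `C` outside `W` leaves `C` either against an edge, hence through a
non-collider in `W`, or along an edge, and then it must turn at a collider among the descendants of
`C`, none of which lies in `W`; either way `W` blocks it. Taking `C = cn D A Y`, this separates `Y`
from `A` by `O` in the proper back-door graph, and `Y` from `Z \ O` by `{A} ∪ O` in `D`.

For the separation of `A` from `O \ Z`, every vertex of `O \ Z` outside `L` has a directed path to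
`Y` that avoids `Z`, since it runs through `cn D A Y`. An unblocked path from `A` to the source of
this directed path in the proper back-door graph could be prolonged along it to an unblocked path
from `A` to `Y`. A path of `D` beginning with a deleted edge is blocked by a collider as above.
-/

section DSeparation

variable {V : Type*} {R R' E : V → V → Prop} {S S' T T' W Z C : Set V} {u v w : V} {p q : List V}

lemma isPath_iff :
    IsPath R u v p ↔ p.IsChain R ∧ p.head? = some u ∧ p.getLast? = some v ∧ p.Nodup :=
  Iff.rfl

lemma isPath_singleton {a : V} : IsPath R u v [a] ↔ a = u ∧ a = v := by
  simp [isPath_iff]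

lemma isPath_cons_cons {a b : V} :
    IsPath R u v (a :: b :: p) ↔ a = u ∧ R a b ∧ a ∉ b :: p ∧ IsPath R b v (b :: p) := by
  simp only [isPath_iff, List.isChain_cons_cons, List.head?_cons, Option.some.injEq,
    List.getLast?_cons_cons, List.nodup_cons]
  tauto

lemma IsPath.exists_eq_cons (h : IsPath R u v p) : ∃ q, p = u :: q :=
  List.head?_eq_some_iff.mp h.2.1

lemma IsPath.exists_eq_concat (h : IsPath R u v p) : ∃ q, p = q ++ [v] :=
  List.getLast?_eq_some_iff.mp h.2.2.1

lemma IsPath.imp_of_mem (h : IsPath R u v p)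
    (hR : ∀ a b, a ∈ p → b ∈ p → R a b → R' a b) : IsPath R' u v p :=
  ⟨List.IsChain.imp_of_mem_imp hR h.1, h.2⟩

lemma IsPath.reverse (h : IsPath (SymmGen E) u v p) : IsPath (SymmGen E) v u p.reverse :=
  ⟨List.isChain_reverse.mpr (h.1.imp fun _ _ => SymmGen.symm), by simpa using h.2.2.1,
    by simpa using h.2.1, List.nodup_reverse.mpr h.2.2.2⟩

lemma IsPath.concat (h : IsPath R u v p) (hvw : R v w) (hw : w ∉ p) :
    IsPath R u w (p ++ [w]) := by
  obtain ⟨hchain, hhead, hlast, hnodup⟩ := h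
  refine ⟨List.isChain_append.mpr ⟨hchain, List.isChain_singleton w, ?_⟩, ?_, by simp, ?_⟩
  · simpa [hlast] using hvw
  · simp [hhead]
  · simpa [List.nodup_append] using ⟨hnodup, fun a ha haw => hw (haw ▸ ha)⟩

lemma IsPath.prefix_of_append_cons (h : IsPath R u v (p ++ w :: q)) :
    IsPath R u w (p ++ [w]) := by
  obtain ⟨hchain, hhead, -, hnodup⟩ := h
  refine ⟨(List.isChain_split.mp hchain).1, ?_, by simp, ?_⟩
  · simpa using hhead
  · exact hnodup.sublist (List.Sublist.append_left (by simp) p)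

lemma mem_desc_singleton : u ∈ desc E {v} ↔ ReflTransGen E v u := by
  simp [desc]

lemma subset_desc : S ⊆ desc E S := fun v hv => ⟨v, hv, .refl⟩

lemma mem_desc_of_edge (hu : u ∈ desc E S) (huv : E u v) : v ∈ desc E S := by
  obtain ⟨s, hs, hsu⟩ := hu
  exact ⟨s, hs, hsu.tail huv⟩

lemma desc_singleton_subset (hv : v ∈ desc E S) : desc E {v} ⊆ desc E S := by
  obtain ⟨s, hs, hsv⟩ := hv
  exact fun u hu => ⟨s, hs, hsv.trans (mem_desc_singleton.mp hu)⟩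

/-- The vertex `y` blocks, given `Z`, every path on which it occurs between `x` and `z`. -/
def BlockedAt (E : V → V → Prop) (Z : Set V) (x y z : V) : Prop :=
  (¬(E x y ∧ E z y) ∧ y ∈ Z) ∨ ((E x y ∧ E z y) ∧ ∀ d ∈ desc E {y}, d ∉ Z)

lemma BlockedAt.symm {x y z : V} (h : BlockedAt E Z x y z) : BlockedAt E Z z y x := by
  simpa only [BlockedAt, and_comm] using h

lemma blocked_iff : Blocked E Z p ↔ ∃ x y z, [x, y, z] <:+: p ∧ BlockedAt E Z x y z := by
  have interiorAt_iff (x y z : V) : InteriorAt p x y z ↔ [x, y, z] <:+: p := by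
    simp [InteriorAt, List.IsInfix, eq_comm]
  simp only [Blocked, BlockedAt, interiorAt_iff, and_or_left, exists_or]

lemma BlockedAt.blocked {x y z : V} (h : BlockedAt E Z x y z) : Blocked E Z (x :: y :: z :: p) :=
  blocked_iff.mpr ⟨x, y, z, ⟨[], p, rfl⟩, h⟩

lemma Blocked.of_infix (h : Blocked E Z p) (hpq : p <:+: q) : Blocked E Z q := by
  obtain ⟨x, y, z, hxyz, hblocked⟩ := blocked_iff.mp h
  exact blocked_iff.mpr ⟨x, y, z, hxyz.trans hpq, hblocked⟩

lemma Blocked.cons {a : V} (h : Blocked E Z p) : Blocked E Z (a :: p) :=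
  h.of_infix (List.suffix_cons a p).isInfix

lemma Blocked.reverse (h : Blocked E Z p) : Blocked E Z p.reverse := by
  obtain ⟨x, y, z, hxyz, hblocked⟩ := blocked_iff.mp h
  exact blocked_iff.mpr ⟨z, y, x, List.reverse_infix.mpr hxyz, hblocked.symm⟩

lemma Blocked.of_concat (h : Blocked E Z (p ++ [u] ++ [v])) (hvu : ¬E v u) (hu : u ∉ Z) :
    Blocked E Z (p ++ [u]) := by
  obtain ⟨x, y, z, hxyz, hblocked⟩ := blocked_iff.mp h
  rcases List.infix_concat_iff.mp hxyz with hsuffix | hinfix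
  · have hsuffix' : [x] ++ [y, z] <:+ p ++ [u, v] := by simpa using hsuffix
    have hyz : [y, z] = [u, v] :=
      ((List.suffix_append_inj_of_length_eq (s₁ := [y, z]) (s₂ := [u, v]) rfl).mp hsuffix').2
    obtain ⟨rfl, rfl⟩ : y = u ∧ z = v := by simpa using hyz
    rcases hblocked with ⟨-, hy⟩ | ⟨hcollider, -⟩
    · exact absurd hy hu
    · exact absurd hcollider.2 hvu
  · exact blocked_iff.mpr ⟨x, y, z, hinfix, hblocked⟩

lemma DSep.mono (h : DSep E S T Z) (hS : S' ⊆ S) (hT : T' ⊆ T) : DSep E S' T' Z :=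
  fun s hs t ht => h s (hS hs) t (hT ht)

lemma DSep.symm (h : DSep E S T Z) : DSep E T S Z := fun t ht s hs p hp => by
  simpa using (h s hs t ht p.reverse (IsPath.reverse hp)).reverse

lemma DSep.of_edge (h : DSep E S {v} Z) (huv : E u v) (hvu : ¬E v u) (hu : u ∉ Z) :
    DSep E S {u} Z := by
  rintro s hs _ rfl p hp
  by_cases hv : v ∈ p
  · obtain ⟨q, r, rfl⟩ := List.append_of_mem hv
    refine (h s hs v rfl _ (IsPath.prefix_of_append_cons hp)).of_infix ?_
    exact ⟨[], r, by simp⟩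
  · have hblocked := h s hs v rfl _ (IsPath.concat hp (.inl huv) hv)
    obtain ⟨q, rfl⟩ := IsPath.exists_eq_concat hp
    exact hblocked.of_concat hvu hu

lemma Acyclic.not_edge_symm (hE : Acyclic E) (huv : E u v) : ¬E v u :=
  fun hvu => hE u v huv (.single hvu)

lemma Acyclic.eq_of_reflTransGen (hE : Acyclic E) (huv : ReflTransGen E u v)
    (hvu : ReflTransGen E v u) : u = v := by
  rcases huv.cases_head with heq | ⟨w, huw, hwv⟩
  · exact heq
  · exact absurd (hwv.trans hvu) (hE u w huw)

lemma DSep.of_reflTransGen (h : DSep E S {v} Z) (hE : Acyclic E)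
    (huv : ReflTransGen (fun a b => E a b ∧ a ∉ Z) u v) : DSep E S {u} Z := by
  induction huv using ReflTransGen.head_induction_on with
  | refl => exact h
  | head hedge _ ih => exact ih.of_edge hedge.1 (hE.not_edge_symm hedge.1) hedge.2

lemma blocked_of_edge (hp : IsPath (SymmGen E) u v (u :: w :: p)) (huw : E u w)
    (hZ : Disjoint Z (desc E {w})) (hv : v ∉ desc E {w}) : Blocked E Z (u :: w :: p) := by
  induction p generalizing u w with
  | nil =>
    obtain ⟨-, rfl⟩ := isPath_singleton.mp (isPath_cons_cons.mp hp).2.2.2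
    exact absurd (subset_desc (mem_singleton _)) hv
  | cons x p ih =>
    have htail : IsPath (SymmGen E) w v (w :: x :: p) := (isPath_cons_cons.mp hp).2.2.2
    rcases (isPath_cons_cons.mp htail).2.1 with hwx | hxw
    · have hsub : desc E {x} ⊆ desc E {w} :=
        desc_singleton_subset (mem_desc_of_edge (subset_desc (mem_singleton w)) hwx)
      exact (ih htail hwx (hZ.mono_right hsub) fun h => hv (hsub h)).cons
    · exact BlockedAt.blocked (.inr ⟨⟨huw, hxw⟩, fun d hd hdZ => hZ.notMem_of_mem_left hdZ hd⟩)

theorem dsep_of_parents_diff_subset (hW : Disjoint W (desc E C)) (hT : Disjoint T (desc E C))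
    (hTW : Disjoint T W) (hparents : parents E C \ C ⊆ W) : DSep E C T W := by
  intro c hc t ht p hp
  obtain ⟨p, rfl⟩ := IsPath.exists_eq_cons hp
  have htC : t ∉ desc E C := hT.notMem_of_mem_left ht
  induction p generalizing c with
  | nil =>
    obtain ⟨-, rfl⟩ := isPath_singleton.mp hp
    exact absurd (subset_desc hc) htC
  | cons w p ih =>
    obtain ⟨-, hcw, -, htail⟩ := isPath_cons_cons.mp hp
    by_cases hw : w ∈ C
    · exact (ih w hw htail).cons
    by_cases hforward : E c w
    · have hsub : desc E {w} ⊆ desc E C :=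
        desc_singleton_subset (mem_desc_of_edge (subset_desc hc) hforward)
      exact blocked_of_edge hp hforward (hW.mono_right hsub) fun h => htC (hsub h)
    · have hwW : w ∈ W := hparents ⟨⟨c, hc, hcw.resolve_left hforward⟩, hw⟩
      cases p with
      | nil =>
        obtain ⟨-, rfl⟩ := isPath_singleton.mp htail
        exact absurd hwW (hTW.notMem_of_mem_left ht)
      | cons x p => exact BlockedAt.blocked (.inl ⟨fun h => hforward h.1, hwW⟩)

end DSeparation

section Adjustment

variable {V : Type*} {D : V → V → Prop} {A Y : V} {L N Z T : Set V} {u v : V} {p : List V}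

lemma notMem_desc_cn (hD : Acyclic D) : A ∉ desc D (cn D A Y) := by
  rintro ⟨c, hc, hcA⟩
  exact hc.1 (hD.eq_of_reflTransGen hcA hc.2.1)

lemma mem_cn_of_mem_desc_cn (hD : Acyclic D) (hu : u ∈ desc D (cn D A Y))
    (huY : ReflTransGen D u Y) : u ∈ cn D A Y := by
  have huA : u ≠ A := ne_of_mem_of_not_mem hu (notMem_desc_cn hD)
  obtain ⟨c, hc, hcu⟩ := hu
  exact ⟨huA, hc.2.1.trans hcu, huY⟩

lemma pbd_iff_of_ne (hu : u ≠ A) : pbd D A Y u v ↔ D u v := by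
  simp [pbd, hu]

lemma pbd_iff_of_notMem_cn (hv : v ∉ cn D A Y) : pbd D A Y u v ↔ D u v := by
  simp [pbd, hv]

lemma Acyclic.pbd (hD : Acyclic D) : Acyclic (pbd D A Y) :=
  fun u v huv hvu => hD u v huv.1 (ReflTransGen.mono (fun _ _ h => h.1) _ _ hvu)

lemma desc_pbd_subset {S : Set V} : desc (pbd D A Y) S ⊆ desc D S := by
  rintro u ⟨s, hs, hsu⟩
  exact ⟨s, hs, ReflTransGen.mono (fun _ _ h => h.1) _ _ hsu⟩

lemma forb_subset_desc : forb D A Y ⊆ desc D {A} := by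
  rintro u (⟨c, hc, hcu⟩ | rfl)
  · exact mem_desc_singleton.mpr (hc.2.1.trans hcu)
  · exact subset_desc (mem_singleton u)

lemma reflTransGen_pbd_of_notMem_desc (huv : ReflTransGen D u v) (hv : v ∉ desc D (cn D A Y)) :
    ReflTransGen (pbd D A Y) u v := by
  induction huv with
  | refl => exact .refl
  | tail _ hedge ih =>
    have hedge' := (pbd_iff_of_notMem_cn fun h => hv (subset_desc h)).mpr hedge
    exact (ih fun h => hv (mem_desc_of_edge h hedge)).tail hedge'

lemma Blocked.of_pbd (hZ : Disjoint Z (desc D (cn D A Y))) (h : Blocked (pbd D A Y) Z p) :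
    Blocked D Z p := by
  obtain ⟨x, y, z, hxyz, hblocked⟩ := blocked_iff.mp h
  refine blocked_iff.mpr ⟨x, y, z, hxyz, ?_⟩
  rcases hblocked with ⟨hnoncollider, hyZ⟩ | ⟨hcollider, hdesc⟩
  · have hy : y ∉ cn D A Y := fun h => hZ.notMem_of_mem_left hyZ (subset_desc h)
    simp only [pbd_iff_of_notMem_cn hy] at hnoncollider
    exact .inl ⟨hnoncollider, hyZ⟩
  · refine .inr ⟨⟨hcollider.1.1, hcollider.2.1⟩, fun d hd hdZ => hdesc d ?_ hdZ⟩
    exact mem_desc_singleton.mpr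
      (reflTransGen_pbd_of_notMem_desc (mem_desc_singleton.mp hd) (hZ.notMem_of_mem_left hdZ))

lemma isPath_pbd {w : V} (hp : IsPath (SymmGen D) A v (A :: w :: p))
    (hw : D A w → w ∉ cn D A Y) : IsPath (SymmGen (pbd D A Y)) A v (A :: w :: p) := by
  obtain ⟨-, hAw, hA, htail⟩ := isPath_cons_cons.mp hp
  have hne {a : V} (ha : a ∈ w :: p) : a ≠ A := ne_of_mem_of_not_mem ha hA
  refine isPath_cons_cons.mpr ⟨rfl, ?_, hA, htail.imp_of_mem fun a b ha hb => ?_⟩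
  · exact hAw.imp (fun h => (pbd_iff_of_notMem_cn (hw h)).mpr h)
      (pbd_iff_of_ne (hne List.mem_cons_self)).mpr
  · exact Or.imp (pbd_iff_of_ne (hne ha)).mpr (pbd_iff_of_ne (hne hb)).mpr

lemma DSep.of_pbd (h : DSep (pbd D A Y) {A} T Z) (hZ : Disjoint Z (desc D (cn D A Y)))
    (hT : Disjoint T (desc D (cn D A Y))) : DSep D {A} T Z := by
  rintro a rfl t ht p hp
  obtain ⟨p, rfl⟩ := IsPath.exists_eq_cons hp
  cases p with
  | nil => exact (h a rfl t ht _ (isPath_singleton.mpr (isPath_singleton.mp hp))).of_pbd hZ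
  | cons w p =>
    by_cases hdeleted : D a w ∧ w ∈ cn D a Y
    · obtain ⟨haw, hw⟩ := hdeleted
      have hsub : desc D {w} ⊆ desc D (cn D a Y) := desc_singleton_subset (subset_desc hw)
      exact blocked_of_edge hp haw (hZ.mono_right hsub)
        fun h => hT.notMem_of_mem_left ht (hsub h)
    · exact (h a rfl t ht _ (isPath_pbd hp (not_and.mp hdeleted))).of_pbd hZ

lemma reflTransGen_pbd_and_notMem (hD : Acyclic D) (hZ : Disjoint Z (cn D A Y))
    (hu : u ∈ cn D A Y) : ReflTransGen (fun a b => pbd D A Y a b ∧ a ∉ Z) u Y := by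
  have huY : ReflTransGen D u Y := hu.2.2
  induction huY using ReflTransGen.head_induction_on with
  | refl => exact .refl
  | @head a b hab hbY ih =>
    have hb : b ∈ cn D A Y :=
      mem_cn_of_mem_desc_cn hD (mem_desc_of_edge (subset_desc hu) hab) hbY
    exact (ih hb).head ⟨(pbd_iff_of_ne hu.1).mpr hab, hZ.notMem_of_mem_right hu⟩

/-- The optimal adjustment set `O` containing `L`: the parents of `cn D A Y` outside `forb D A Y`,
together with `L`. -/
def optimalAdjSet (D : V → V → Prop) (A Y : V) (L : Set V) : Set V :=
  (parents D (cn D A Y) \ forb D A Y) ∪ L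

lemma disjoint_optimalAdjSet_forb (hL : Disjoint L (forb D A Y)) :
    Disjoint (optimalAdjSet D A Y L) (forb D A Y) :=
  disjoint_sdiff_left.union_left hL

lemma parents_cn_diff_subset (hD : Acyclic D) :
    parents D (cn D A Y) \ cn D A Y ⊆ {A} ∪ optimalAdjSet D A Y L := by
  rintro u ⟨⟨c, hc, huc⟩, hu⟩
  have hu' : u ∉ desc D (cn D A Y) :=
    fun h => hu (mem_cn_of_mem_desc_cn hD h (hc.2.2.head huc))
  by_cases huA : u = A
  · exact .inl huA
  · exact .inr (.inl ⟨⟨c, hc, huc⟩, not_or.mpr ⟨hu', huA⟩⟩)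

lemma parents_pbd_cn_diff_subset (hD : Acyclic D) :
    parents (pbd D A Y) (cn D A Y) \ cn D A Y ⊆ optimalAdjSet D A Y L := by
  rintro u ⟨⟨c, hc, huc⟩, hu⟩
  exact (parents_cn_diff_subset hD ⟨⟨c, hc, huc.1⟩, hu⟩).resolve_left fun huA => huc.2 ⟨huA, hc⟩

lemma gac_optimalAdjSet (hD : Acyclic D) (hY : Y ∈ cn D A Y) (hL : Disjoint L (forb D A Y))
    (hN : optimalAdjSet D A Y L ⊆ N) : GAC D A Y L N (optimalAdjSet D A Y L) := by
  have hO := disjoint_optimalAdjSet_forb hL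
  have hsep : DSep (pbd D A Y) (cn D A Y) {A} (optimalAdjSet D A Y L) :=
    dsep_of_parents_diff_subset (hO.mono_right (desc_pbd_subset.trans subset_union_left))
      (disjoint_singleton_left.mpr fun h => notMem_desc_cn hD (desc_pbd_subset h))
      (hO.symm.mono_left subset_union_right) (parents_pbd_cn_diff_subset hD)
  have hsepY : DSep (pbd D A Y) {A} {Y} (optimalAdjSet D A Y L) :=
    (hsep.mono (singleton_subset_iff.mpr hY) subset_rfl).symm
  exact ⟨hsepY, hO.inter_eq, subset_union_right, hN⟩

lemma GAC.dsep_optimalAdjSet_diff (hD : Acyclic D) (h : GAC D A Y L N Z) :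
    DSep D {A} (optimalAdjSet D A Y L \ Z) Z := by
  obtain ⟨hsep, hZforb, hLZ, -⟩ := h
  have hZ : Disjoint Z (desc D (cn D A Y)) :=
    (disjoint_iff_inter_eq_empty.mpr hZforb).mono_right subset_union_left
  rintro a ha o ⟨⟨⟨c, hc, hoc⟩, ho⟩ | hoL, hoZ⟩
  · have hoY : ReflTransGen (fun a b => pbd D A Y a b ∧ a ∉ Z) o Y :=
      (reflTransGen_pbd_and_notMem hD (hZ.mono_right subset_desc) hc).head
        ⟨(pbd_iff_of_ne fun hoA => ho (.inr hoA)).mpr hoc, hoZ⟩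
    have hsepo : DSep (pbd D A Y) {A} {o} Z := hsep.of_reflTransGen hD.pbd hoY
    exact hsepo.of_pbd hZ (disjoint_singleton_left.mpr fun h => ho (.inl h)) a ha o rfl
  · exact absurd (hLZ hoL) hoZ

lemma dsep_diff_optimalAdjSet (hD : Acyclic D) (hY : Y ∈ cn D A Y)
    (hL : Disjoint L (forb D A Y)) (hZ : Disjoint Z (forb D A Y)) :
    DSep D {Y} (Z \ optimalAdjSet D A Y L) ({A} ∪ optimalAdjSet D A Y L) := by
  have hW : Disjoint ({A} ∪ optimalAdjSet D A Y L) (desc D (cn D A Y)) :=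
    (disjoint_singleton_left.mpr (notMem_desc_cn hD)).union_left
      ((disjoint_optimalAdjSet_forb hL).mono_right subset_union_left)
  have hT : Disjoint (Z \ optimalAdjSet D A Y L) (forb D A Y) := hZ.mono_left sdiff_subset
  have hTW : Disjoint (Z \ optimalAdjSet D A Y L) ({A} ∪ optimalAdjSet D A Y L) :=
    (hT.mono_right subset_union_right).union_right disjoint_sdiff_left
  have hsep := dsep_of_parents_diff_subset hW (hT.mono_right subset_union_left) hTW
    (parents_cn_diff_subset hD)
  exact hsep.mono (singleton_subset_iff.mpr hY) subset_rfl

end Adjustment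

theorem stmt8_general {V : Type*} {D : V → V → Prop} (hD : Acyclic D) {A Y : V} {L N : Set V}
    (hAY : A ≠ Y) (hAancY : ReflTransGen D A Y) (hL : Disjoint L (forb D A Y))
    (hN : optimalAdjSet D A Y L ⊆ N) :
    GAC D A Y L N (optimalAdjSet D A Y L) ∧
    ∀ Z, GAC D A Y L N Z →
      DSep D {A} (optimalAdjSet D A Y L \ Z) Z ∧
      DSep D {Y} (Z \ optimalAdjSet D A Y L) ({A} ∪ optimalAdjSet D A Y L) := by
  have hY : Y ∈ cn D A Y := ⟨hAY.symm, hAancY, .refl⟩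
  refine ⟨gac_optimalAdjSet hD hY hL hN, fun Z hZ => ⟨hZ.dsep_optimalAdjSet_diff hD, ?_⟩⟩
  exact dsep_diff_optimalAdjSet hD hY hL (disjoint_iff_inter_eq_empty.mpr hZ.2.1)

/-- Proposition 2 (statement 8): with no hidden variables (`N = V`), the set
`O = (pa_G(cn(A,Y,G)) \ forb(A,Y,G)) ∪ L` satisfies the graphical adjustment
criterion, and for every `Z` satisfying the criterion, `A ⊥⊥_G O \ Z | Z` and
`Y ⊥⊥_G Z \ O | {A} ∪ O`. -/
theorem stmt8 {V : Type*} [Fintype V] [DecidableEq V]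
    (D : V → V → Prop) (hacy : Acyclic D)
    (A Y : V) (L : Set V)
    (hAY : A ≠ Y) (hAancY : Relation.ReflTransGen D A Y)
    (hLnd : L ∩ desc D {A} = ∅) (hLY : Y ∉ L) :
    GAC D A Y L Set.univ ((parents D (cn D A Y) \ forb D A Y) ∪ L) ∧
    ∀ Z, GAC D A Y L Set.univ Z →
      DSep D {A} (((parents D (cn D A Y) \ forb D A Y) ∪ L) \ Z) Z ∧
      DSep D {Y} (Z \ ((parents D (cn D A Y) \ forb D A Y) ∪ L))
        ({A} ∪ ((parents D (cn D A Y) \ forb D A Y) ∪ L)) := by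
  have hL : Disjoint L (desc D {A}) := disjoint_iff_inter_eq_empty.mpr hLnd
  exact stmt8_general hacy hAY hAancY (hL.mono_right forb_subset_desc) (subset_univ _)

end CausalGraph
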